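/- Assume p ∤ n (so L/K is tamely ramified). Let r ∈ ℤ and 1 ≤ h ≤ n be such that n divides hr. Set s = hr/n, u = gcd(r,n), and v = gcd(h,s). Then g_h(r) = s if and only if p does not divide the binomial coefficient C(u,v). In particular, if u < v then g_h(r) > s. -/

import Mathlib

open scoped Classical

/-- `Ecoef K L h α` is `E_h(α) = e_h(σ₁(α),…,σₙ(α))`, characterized by the fact that
`(-1)^h * E_h(α)` is the coefficient of `X^(n-h)` in the characteristic polynomial of
multiplication by `α` on `L` as a `K`-vector space. -/
noncomputable def Ecoef (K L : Type) [Field K] [Field L] [Algebra K L]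
    [FiniteDimensional K L] (h : ℕ) (α : L) : K :=
  (-1) ^ h * ((LinearMap.mulLeft K α).charpoly.coeff (Module.finrank K L - h))

/-!
Let `ϖ` be a uniformizer of `L`. As `L/K` is totally ramified of degree `n`, the powers
`1, ϖ, …, ϖ ^ (n - 1)` form a `K`-basis of `L` whose valuations are distinct modulo `n`, so the
valuation of a `K`-combination of them is that of its dominant term. Let `A` be the matrix of
multiplication by `α` in this basis, where `r ≤ v_L(α)`, and let `D = diag(ϖ ^ i)`. Then
`B = ϖ ^ (-r) • D * A * D⁻¹` has integral entries, its columns sum to `c = α * ϖ ^ (-r)`, and its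
`(i, j)` entry is a non-unit unless `i ≡ j + r` modulo `n`. Hence `B` reduces to `c̄` times the
permutation matrix of translation by `r` on `ℤ/n`, which consists of `u = gcd(r, n)` cycles of
length `m = n / u` and so has characteristic polynomial `(X ^ m - 1) ^ u`. As `n ∣ h * r` gives
`h = m * v`, we get `E_h(α) = ϖ ^ (h * r) * z` with `z ≡ ± c ^ h * C(u, v)`. Thus
`s ≤ v_K(E_h(α))` always; the inequality is strict when `p ∣ C(u, v)`, and otherwise
`α = ϖ ^ r` attains equality.
-/

open Polynomial WithZero

section Charpoly

variable {R : Type*} [CommRing R]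

theorem coeff_charpolyRev {ι : Type*} [Fintype ι] [DecidableEq ι] (M : Matrix ι ι R) {h : ℕ}
    (hh : h ≤ Fintype.card ι) :
    M.charpolyRev.coeff h = M.charpoly.coeff (Fintype.card ι - h) := by
  nontriviality R
  rw [← Matrix.reverse_charpoly, coeff_reverse, Matrix.charpoly_natDegree_eq_dim, revAt_le hh]

theorem charpolyRev_smul {ι : Type*} [Fintype ι] [DecidableEq ι] (c : R) (M : Matrix ι ι R) :
    (c • M).charpolyRev = M.charpolyRev.comp (C c * X) := by
  rw [← coe_compRingHom_apply, Matrix.charpolyRev, Matrix.charpolyRev, RingHom.map_det, map_sub,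
    map_one]
  congr 2
  ext1 i j
  simp only [Matrix.smul_apply, Matrix.map_apply, smul_eq_mul, C_mul, RingHom.mapMatrix_apply,
    coe_compRingHom, mul_comp, X_comp, C_comp]
  ring

theorem coeff_charpoly_smul {ι : Type*} [Fintype ι] [DecidableEq ι] (c : R) (M : Matrix ι ι R)
    {h : ℕ} (hh : h ≤ Fintype.card ι) :
    (c • M).charpoly.coeff (Fintype.card ι - h) =
      c ^ h * M.charpoly.coeff (Fintype.card ι - h) := by
  rw [← coeff_charpolyRev _ hh, ← coeff_charpolyRev _ hh, charpolyRev_smul, comp_C_mul_X_coeff,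
    mul_comm]

theorem charpoly_diagonal_conj {ι F : Type*} [Fintype ι] [DecidableEq ι] [Field F] {d : ι → F}
    (hd : ∀ i, d i ≠ 0) (M : Matrix ι ι F) :
    (Matrix.of fun i j => d i * M i j * (d j)⁻¹).charpoly = M.charpoly := by
  have hD : Matrix.diagonal d⁻¹ * Matrix.diagonal d = 1 := by
    rw [Matrix.diagonal_mul_diagonal, ← Matrix.diagonal_one]
    exact congrArg _ (funext fun i => inv_mul_cancel₀ (hd i))
  have hconj : (Matrix.of fun i j => d i * M i j * (d j)⁻¹) =
      Matrix.diagonal d * M * Matrix.diagonal d⁻¹ := by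
    ext i j
    simp [Matrix.mul_diagonal, Matrix.diagonal_mul]
  rw [hconj, Matrix.charpoly_mul_comm, ← mul_assoc, hD, one_mul]

theorem charpoly_blockDiagonal {κ o : Type*} [Fintype κ] [DecidableEq κ] [Fintype o]
    [DecidableEq o] (M : o → Matrix κ κ R) :
    (Matrix.blockDiagonal M).charpoly = ∏ k, (M k).charpoly := by
  have hchar : (Matrix.blockDiagonal M).charmatrix =
      Matrix.blockDiagonal fun k => (M k).charmatrix := by
    ext1 ⟨i, a⟩ ⟨j, b⟩
    by_cases h : a = b <;>
      simp [Matrix.charmatrix_apply, Matrix.blockDiagonal_apply, Matrix.diagonal_apply, h]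
  rw [Matrix.charpoly, hchar, Matrix.det_blockDiagonal]
  rfl

end Charpoly

section Translation

variable {R : Type*} [CommRing R]

theorem circulant_single_pow {S G : Type*} [Semiring S] [AddGroup G] [Fintype G] [DecidableEq G]
    (g : G) (k : ℕ) :
    Matrix.circulant (Pi.single g (1 : S)) ^ k = Matrix.circulant (Pi.single (k • g) 1) := by
  induction k with
  | zero => rw [pow_zero, zero_nsmul, Matrix.circulant_single_one]
  | succ k ih =>
    rw [pow_succ, ih, Matrix.circulant_mul, Matrix.mulVec_single_one]
    congr 1
    ext i
    simp [Matrix.circulant_apply, Pi.single_apply, succ_nsmul, sub_eq_iff_eq_add]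

theorem eq_zero_of_aeval_circulant_single_eq_zero {S G : Type*} [CommSemiring S] [AddGroup G]
    [Fintype G] [DecidableEq G] {g : G} {q : S[X]} (hdeg : q.degree < addOrderOf g)
    (hq : aeval (Matrix.circulant (Pi.single g (1 : S))) q = 0) : q = 0 := by
  by_contra hq0
  have hk : q.natDegree < addOrderOf g := (natDegree_lt_iff_degree_lt hq0).2 hdeg
  have hentry := congrFun (congrFun hq (q.natDegree • g)) 0
  rw [aeval_eq_sum_range, Matrix.sum_apply,
    Finset.sum_eq_single_of_mem q.natDegree (Finset.self_mem_range_succ _)] at hentry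
  · simp [circulant_single_pow, Matrix.circulant_apply, hq0] at hentry
  · intro j hj hjk
    have hne : q.natDegree • g ≠ j • g := fun h => hjk <| nsmul_injOn_Iio_addOrderOf
      ((Finset.mem_range_succ_iff.1 hj).trans_lt hk) hk h.symm
    simp [circulant_single_pow, Matrix.circulant_apply, hne]

theorem charpoly_circulant_single_of_addOrderOf_eq_card {G : Type*} [AddGroup G] [Fintype G]
    [DecidableEq G] {g : G} (hg : addOrderOf g = Fintype.card G) :
    (Matrix.circulant (Pi.single g (1 : R))).charpoly = X ^ Fintype.card G - 1 := by
  nontriviality R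
  set P := Matrix.circulant (Pi.single g (1 : R))
  set m := Fintype.card G
  have hm : m ≠ 0 := Fintype.card_ne_zero
  have hmonic : (X ^ m - 1 : R[X]).Monic := by simpa using monic_X_pow_sub_C (1 : R) hm
  have hdegree : P.charpoly.degree = (X ^ m - 1 : R[X]).degree := by
    rw [P.charpoly_degree_eq_dim, ← C_1, degree_X_pow_sub_C (Nat.pos_of_ne_zero hm)]
  have hlt : (P.charpoly - (X ^ m - 1)).degree < ((addOrderOf g : ℕ) : WithBot ℕ) := by
    rw [hg, ← P.charpoly_degree_eq_dim]
    exact degree_sub_lt_left hdegree P.charpoly_monic.ne_zero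
      (P.charpoly_monic.leadingCoeff.trans hmonic.leadingCoeff.symm)
  refine sub_eq_zero.1 (eq_zero_of_aeval_circulant_single_eq_zero hlt ?_)
  rw [map_sub, Matrix.aeval_self_charpoly, map_sub, map_pow, aeval_X, map_one,
    circulant_single_pow, ← hg, addOrderOf_nsmul_eq_zero, Matrix.circulant_single_one, sub_self,
    sub_zero]

theorem charpoly_circulant_single_coe {G : Type*} [AddCommGroup G] [Fintype G] [DecidableEq G]
    (H : AddSubgroup G) [Fintype H] (g : H) :
    (Matrix.circulant (Pi.single (g : G) (1 : R))).charpoly =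
      (Matrix.circulant (Pi.single g (1 : R))).charpoly ^ H.index := by
  let f : H × (G ⧸ H) → G := fun x => x.1 + x.2.out
  have hf (x y : H × (G ⧸ H)) (k : H) : f x - f y = k ↔ x.2 = y.2 ∧ x.1 - y.1 = k := by
    have hmk (z : H × (G ⧸ H)) : (f z : G ⧸ H) = z.2 := by simp [f]
    constructor
    · intro h
      have hq : x.2 = y.2 := by
        rw [← hmk x, ← hmk y, eq_comm, QuotientAddGroup.eq, neg_add_eq_sub, h]
        exact k.2
      exact ⟨hq, Subtype.ext (by simpa [f, hq] using h)⟩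
    · rintro ⟨hq, rfl⟩
      simp [f, hq]
  have hinj : Function.Injective f := fun x y hxy => by
    obtain ⟨hq, hH⟩ := (hf x y 0).1 (by simp [hxy])
    exact Prod.ext (sub_eq_zero.1 hH) hq
  have hbij : Function.Bijective f :=
    (Nat.bijective_iff_injective_and_card f).2 ⟨hinj, by
      rw [Nat.card_prod, ← H.index_eq_card, H.card_mul_index]⟩
  have hblock : Matrix.blockDiagonal (fun _ : G ⧸ H => Matrix.circulant (Pi.single g (1 : R))) =
      Matrix.reindex (Equiv.ofBijective f hbij).symm (Equiv.ofBijective f hbij).symm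
        (Matrix.circulant (Pi.single (g : G) 1)) := by
    ext x y
    simp [Matrix.blockDiagonal_apply, Matrix.circulant_apply, Pi.single_apply, hf, ite_and]
  rw [← Matrix.charpoly_reindex (Equiv.ofBijective f hbij).symm, ← hblock, charpoly_blockDiagonal,
    Finset.prod_const, Finset.card_univ, ← Nat.card_eq_fintype_card, H.index_eq_card]

theorem charpoly_circulant_single {G : Type*} [AddCommGroup G] [Fintype G] [DecidableEq G] (g : G) :
    (Matrix.circulant (Pi.single g (1 : R))).charpoly =
      (X ^ addOrderOf g - 1) ^ (AddSubgroup.zmultiples g).index := by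
  have hcard : addOrderOf g = Fintype.card (AddSubgroup.zmultiples g) := by
    rw [← Nat.card_eq_fintype_card, Nat.card_zmultiples]
  let g' : AddSubgroup.zmultiples g := ⟨g, AddSubgroup.mem_zmultiples g⟩
  rw [charpoly_circulant_single_coe _ g', charpoly_circulant_single_of_addOrderOf_eq_card
    ((AddSubgroup.addOrderOf_mk g _).trans hcard), hcard]

theorem coeff_X_pow_sub_one_pow {m u t : ℕ} (hm : 0 < m) (ht : t ≤ u) :
    ((X ^ m - 1 : R[X]) ^ u).coeff (m * u - m * t) = (-1) ^ t * (u.choose t : R) := by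
  have hexpand : (X ^ m - 1 : R[X]) ^ u = expand R m ((X + C (-1)) ^ u) := by
    simp [sub_eq_add_neg]
  rw [hexpand, ← Nat.mul_sub, mul_comm m, coeff_expand_mul hm, coeff_X_add_C_pow,
    Nat.sub_sub_self ht, Nat.choose_symm ht]

theorem coeff_charpoly_circulant_single {G : Type*} [AddCommGroup G] [Fintype G] [DecidableEq G]
    {g : G} {u t h : ℕ} (hu : addOrderOf g * u = Fintype.card G) (ht : addOrderOf g * t = h)
    (hh : h ≤ Fintype.card G) :
    (Matrix.circulant (Pi.single g (1 : R))).charpoly.coeff (Fintype.card G - h) =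
      (-1) ^ t * (u.choose t : R) := by
  have hm : 0 < addOrderOf g := addOrderOf_pos g
  have hindex : (AddSubgroup.zmultiples g).index = u := by
    apply Nat.eq_of_mul_eq_mul_left hm
    rw [hu, ← Nat.card_zmultiples, AddSubgroup.card_mul_index, Nat.card_eq_fintype_card]
  rw [charpoly_circulant_single, hindex, ← hu, ← ht]
  exact coeff_X_pow_sub_one_pow hm (Nat.le_of_mul_le_mul_left (by rwa [hu, ht]) hm)

theorem addOrderOf_intCast_mul_gcd {n : ℕ} (hn : n ≠ 0) (r : ℤ) :
    addOrderOf (r : ZMod n) * Int.gcd r n = n := by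
  have hr : addOrderOf (r : ZMod n) = n / n.gcd r.natAbs := by
    rw [← ZMod.addOrderOf_coe _ hn]
    rcases r.natAbs_eq with h | h <;> rw [h] <;> simp
  rw [hr, Int.gcd_comm, Int.gcd_def, Int.natAbs_natCast, Nat.div_mul_cancel (Nat.gcd_dvd_left _ _)]

theorem addOrderOf_intCast_mul_gcd_ediv {n : ℕ} (hn : n ≠ 0) {r : ℤ} {h : ℕ}
    (hdvd : (n : ℤ) ∣ h * r) :
    addOrderOf (r : ZMod n) * Int.gcd h (h * r / n) = h := by
  have hgcd : n * Int.gcd h (h * r / n) = h * Int.gcd r n := by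
    have h1 := Int.gcd_mul_left n h (h * r / n)
    have h2 := Int.gcd_mul_left h n r
    rw [Int.mul_ediv_cancel' hdvd] at h1
    rw [Int.natAbs_natCast] at h1 h2
    rw [← h1, Int.gcd_comm r, ← h2, mul_comm (n : ℤ)]
  have hu : 0 < Int.gcd r n := Int.gcd_pos_of_ne_zero_right _ (by exact_mod_cast hn)
  nth_rw 1 [← addOrderOf_intCast_mul_gcd hn r] at hgcd
  exact Nat.eq_of_mul_eq_mul_right hu (by linarith)

end Translation

section Valuation

theorem valuation_le_valuation_sum_of_injOn {R Γ₀ ι : Type*} [Ring R]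
    [LinearOrderedCommMonoidWithZero Γ₀] [Fintype ι] (v : Valuation R Γ₀) {f : ι → R}
    (hf : {i | v (f i) ≠ 0}.InjOn fun i => v (f i)) (j : ι) : v (f j) ≤ v (∑ i, f i) := by
  obtain ⟨k, -, hk⟩ := Finset.exists_max_image Finset.univ (fun i => v (f i)) ⟨j, Finset.mem_univ j⟩
  by_cases h0 : v (f k) = 0
  · exact (hk j (Finset.mem_univ j)).trans (h0 ▸ zero_le)
  have hlt (i : ι) (hi : i ∈ Finset.univ \ {k}) : v (f i) < v (f k) := by
    refine (hk i (Finset.mem_univ i)).lt_of_ne fun heq => ?_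
    exact Finset.notMem_singleton.1 (Finset.mem_sdiff.1 hi).2 (hf (heq.trans_ne h0) h0 heq)
  rw [v.map_sum_eq_of_lt (Finset.mem_univ k) hlt]
  exact hk j (Finset.mem_univ j)

theorem residue_eq_zero_iff_valuation_lt_one {L Γ₀ : Type*} [Field L]
    [LinearOrderedCommGroupWithZero Γ₀] {w : Valuation L Γ₀} {z : w.valuationSubring} :
    IsLocalRing.residue w.valuationSubring z = 0 ↔ w z < 1 := by
  rw [IsLocalRing.residue_eq_zero_iff, Valuation.mem_maximalIdeal_iff]

theorem exists_map_residue_eq_smul_circulant {L Γ₀ G : Type*} [Field L]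
    [LinearOrderedCommGroupWithZero Γ₀] [AddCommGroup G] [Fintype G] [DecidableEq G]
    {w : Valuation L Γ₀} {B : Matrix G G L} {c : w.valuationSubring} {g : G}
    (hB : ∀ i j, w (B i j) ≤ 1) (hoff : ∀ i j, i - j ≠ g → w (B i j) < 1)
    (hcol : ∀ j, ∑ i, B i j = c) :
    ∃ B' : Matrix G G w.valuationSubring, B'.map w.valuationSubring.subtype = B ∧
      B'.map (IsLocalRing.residue _) =
        IsLocalRing.residue _ c • Matrix.circulant (Pi.single g 1) := by
  let B' : Matrix G G w.valuationSubring := Matrix.of fun i j => ⟨B i j, hB i j⟩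
  have hoff' (i j : G) (hij : i - j ≠ g) : IsLocalRing.residue _ (B' i j) = 0 :=
    residue_eq_zero_iff_valuation_lt_one.2 (hoff i j hij)
  have hcol' (j : G) : ∑ i, B' i j = c :=
    Subtype.ext <| (map_sum w.valuationSubring.subtype _ _).trans (hcol j)
  refine ⟨B', rfl, ?_⟩
  ext i j
  rw [Matrix.map_apply, Matrix.smul_apply, Matrix.circulant_apply, Pi.single_apply, smul_eq_mul,
    mul_ite, mul_one, mul_zero]
  split_ifs with hij
  · rw [← hcol' j, map_sum, Finset.sum_eq_single_of_mem i (Finset.mem_univ i)]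
    intro k _ hk
    exact hoff' k j fun h => hk (sub_left_injective (h.trans hij.symm))
  · exact hoff' i j hij

theorem valuation_natCast_lt_one_iff {L Γ₀ : Type*} [Field L]
    [LinearOrderedCommGroupWithZero Γ₀] {w : Valuation L Γ₀} {p : ℕ} (hp : p.Prime)
    (hpw : w (p : L) < 1) (k : ℕ) : w (k : L) < 1 ↔ p ∣ k := by
  have hres (l : ℕ) : w (l : L) < 1 ↔ (l : IsLocalRing.ResidueField w.valuationSubring) = 0 := by
    rw [← map_natCast (IsLocalRing.residue w.valuationSubring),
      residue_eq_zero_iff_valuation_lt_one]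
    rfl
  have := (CharP.charP_iff_prime_eq_zero hp).2 ((hres p).1 hpw)
  rw [hres, CharP.cast_eq_zero_iff _ p]

theorem exists_valuation_eq_exp_neg {L : Type*} [Field L] {v : L → ℤ}
    (hmul : ∀ x y : L, x ≠ 0 → y ≠ 0 → v (x * y) = v x + v y)
    (hadd : ∀ x y : L, x ≠ 0 → y ≠ 0 → x + y ≠ 0 → min (v x) (v y) ≤ v (x + y)) :
    ∃ w : Valuation L ℤᵐ⁰, ∀ x ≠ 0, w x = exp (-v x) := by
  have h1 : v 1 = 0 := by simpa using hmul 1 1 one_ne_zero one_ne_zero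
  let w : Valuation L ℤᵐ⁰ :=
    { toFun x := if x = 0 then 0 else exp (-v x)
      map_zero' := if_pos rfl
      map_one' := by simp [h1]
      map_mul' x y := by
        by_cases hx : x = 0
        · simp [hx]
        by_cases hy : y = 0
        · simp [hy]
        simp [hx, hy, hmul x y hx hy, exp_add, mul_comm]
      map_add_le_max' x y := by
        by_cases hx : x = 0
        · simp [hx]
        by_cases hy : y = 0
        · simp [hy]
        by_cases hxy : x + y = 0
        · simp [hxy]
        rw [if_neg hx, if_neg hy, if_neg hxy, le_max_iff, exp_le_exp, exp_le_exp, neg_le_neg_iff,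
          neg_le_neg_iff, ← min_le_iff]
        exact hadd x y hx hy hxy }
  exact ⟨w, fun x hx => if_neg hx⟩

theorem valuation_le_exp_neg_mul_iff {F : Type*} [Field F] {v : F → ℤ} {w : Valuation F ℤᵐ⁰}
    {m : ℤ} (hm : 0 < m) (hw : ∀ x ≠ 0, w x = exp (-(m * v x))) (x : F) (a : ℤ) :
    w x ≤ exp (-(m * a)) ↔ x = 0 ∨ a ≤ v x := by
  rcases eq_or_ne x 0 with rfl | hx
  · simp
  · rw [hw x hx, exp_le_exp, neg_le_neg_iff, mul_le_mul_iff_right₀ hm, or_iff_right hx]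

theorem valuation_lt_exp_neg_mul_iff {F : Type*} [Field F] {v : F → ℤ} {w : Valuation F ℤᵐ⁰}
    {m : ℤ} (hm : 0 < m) (hw : ∀ x ≠ 0, w x = exp (-(m * v x))) (x : F) (a : ℤ) :
    w x < exp (-(m * a)) ↔ x = 0 ∨ a + 1 ≤ v x := by
  rcases eq_or_ne x 0 with rfl | hx
  · simp
  · rw [hw x hx, exp_lt_exp, neg_lt_neg_iff, mul_lt_mul_iff_right₀ hm, or_iff_right hx,
      Int.add_one_le_iff]

theorem valuation_eq_exp_neg_mul_iff {F : Type*} [Field F] {v : F → ℤ} {w : Valuation F ℤᵐ⁰}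
    {m : ℤ} (hm : m ≠ 0) (hw : ∀ x ≠ 0, w x = exp (-(m * v x))) (x : F) (a : ℤ) :
    w x = exp (-(m * a)) ↔ x ≠ 0 ∧ v x = a := by
  rcases eq_or_ne x 0 with rfl | hx
  · simp [exp_ne_zero.symm]
  · rw [hw x hx, exp_inj, neg_inj, mul_right_inj' hm, and_iff_right hx]

end Valuation

section TotallyRamified

variable {K L : Type*} [Field K] [Field L] [Algebra K L] {n : ℕ} {w : Valuation L ℤᵐ⁰} {ϖ : L}

theorem valuation_zpow_uniformizer (hϖ : w ϖ = exp (-1)) (k : ℤ) : w (ϖ ^ k) = exp (-k) := by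
  rw [map_zpow₀, hϖ, ← exp_zsmul, smul_eq_mul, mul_neg_one]

theorem uniformizer_ne_zero (hϖ : w ϖ = exp (-1)) : ϖ ≠ 0 :=
  w.ne_zero_iff.1 (hϖ ▸ exp_ne_zero)

theorem valuation_mul_zpow_neg_le_one_iff (hϖ : w ϖ = exp (-1)) (x : L) (k : ℤ) :
    w (x * ϖ ^ (-k)) ≤ 1 ↔ w x ≤ exp (-k) := by
  rw [map_mul, valuation_zpow_uniformizer hϖ, exp_neg, ← div_eq_mul_inv, div_le_one₀ exp_pos]

theorem valuation_mul_zpow_neg_lt_one_iff (hϖ : w ϖ = exp (-1)) (x : L) (k : ℤ) :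
    w (x * ϖ ^ (-k)) < 1 ↔ w x < exp (-k) := by
  rw [map_mul, valuation_zpow_uniformizer hϖ, exp_neg, ← div_eq_mul_inv, div_lt_one₀ exp_pos]

theorem intCast_eq_zero_of_valuation_mul_zpow_eq_one (hϖ : w ϖ = exp (-1))
    (hK : ∀ x : K, x ≠ 0 → ∃ a : ℤ, w (algebraMap K L x) = exp (n * a)) {x : K} {k : ℤ}
    (h1 : w (algebraMap K L x * ϖ ^ k) = 1) : (k : ZMod n) = 0 := by
  have hx : x ≠ 0 := by
    rintro rfl
    simp at h1
  obtain ⟨a, ha⟩ := hK x hx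
  rw [map_mul, ha, valuation_zpow_uniformizer hϖ, ← exp_add, ← exp_zero, exp_inj] at h1
  exact (ZMod.intCast_zmod_eq_zero_iff_dvd k n).2 ⟨a, by linarith⟩

theorem valuation_le_valuation_sum_mul_zpow (hϖ : w ϖ = exp (-1))
    (hK : ∀ x : K, x ≠ 0 → ∃ a : ℤ, w (algebraMap K L x) = exp (n * a)) {ι : Type*} [Fintype ι]
    (x : ι → K) {e : ι → ℤ} (he : Function.Injective fun i => (e i : ZMod n)) (j : ι) :
    w (algebraMap K L (x j) * ϖ ^ e j) ≤ w (∑ i, algebraMap K L (x i) * ϖ ^ e i) := by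
  refine valuation_le_valuation_sum_of_injOn w
    (f := fun i => algebraMap K L (x i) * ϖ ^ e i) (fun i _ k hk hik => he ?_) j
  have hquot : w (algebraMap K L (x i / x k) * ϖ ^ (e i - e k)) = 1 := by
    rw [map_div₀, zpow_sub₀ (uniformizer_ne_zero hϖ), div_mul_div_comm, map_div₀]
    exact div_eq_one_iff_eq hk |>.2 hik
  simpa [sub_eq_zero] using intCast_eq_zero_of_valuation_mul_zpow_eq_one hϖ hK hquot

theorem exists_basis_pow_uniformizer [NeZero n] (hϖ : w ϖ = exp (-1))
    (hK : ∀ x : K, x ≠ 0 → ∃ a : ℤ, w (algebraMap K L x) = exp (n * a))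
    (hrank : Module.finrank K L = n) :
    ∃ b : Module.Basis (ZMod n) K L, ∀ i, b i = ϖ ^ (i.val : ℤ) := by
  have hli : LinearIndependent K fun i : ZMod n => ϖ ^ (i.val : ℤ) := by
    rw [Fintype.linearIndependent_iff]
    intro x hx j
    have hle := valuation_le_valuation_sum_mul_zpow hϖ hK x (e := fun i => (i.val : ℤ))
      (fun i j hij => by simpa using hij) j
    simp only [← Algebra.smul_def, hx, map_zero, le_zero_iff, map_eq_zero, smul_eq_zero] at hle
    exact hle.resolve_right (zpow_ne_zero _ (uniformizer_ne_zero hϖ))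
  exact ⟨basisOfLinearIndependentOfCardEqFinrank hli (by rw [ZMod.card, hrank]), fun i => by simp⟩

/-- The matrix `ϖ ^ (-r) • D * A * D⁻¹`, where `A` is the matrix of multiplication by `α` in the
basis `b` and `D = diag(ϖ ^ i)`, the index `i : ZMod n` standing for its representative in
`[0, n)`. For `b i = ϖ ^ i` and `r` at most the valuation of `α`, this is a multiple of a conjugate
of `A` that has integral entries. -/
noncomputable def normalizedMulMatrix [NeZero n] (b : Module.Basis (ZMod n) K L) (ϖ : L) (r : ℤ)
    (α : L) : Matrix (ZMod n) (ZMod n) L :=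
  Matrix.of fun i j => algebraMap K L (LinearMap.toMatrix b b (LinearMap.mulLeft K α) i j) *
    ϖ ^ ((i.val : ℤ) - j.val - r)

section NormalizedMulMatrix

variable [NeZero n] {b : Module.Basis (ZMod n) K L} {r : ℤ} {α : L}

theorem sum_normalizedMulMatrix (hϖ0 : ϖ ≠ 0) (hb : ∀ i, b i = ϖ ^ (i.val : ℤ)) (j : ZMod n) :
    ∑ i, normalizedMulMatrix b ϖ r α i j = α * ϖ ^ (-r) := by
  have hexpand : ∑ i, algebraMap K L (LinearMap.toMatrix b b (LinearMap.mulLeft K α) i j) *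
      ϖ ^ (i.val : ℤ) = α * ϖ ^ (j.val : ℤ) := by
    simpa [LinearMap.toMatrix_apply, Algebra.smul_def, hb] using b.sum_repr (α * b j)
  calc ∑ i, normalizedMulMatrix b ϖ r α i j
    _ = (∑ i, algebraMap K L (LinearMap.toMatrix b b (LinearMap.mulLeft K α) i j) *
          ϖ ^ (i.val : ℤ)) * (ϖ ^ (-(j.val : ℤ)) * ϖ ^ (-r)) := by
      rw [Finset.sum_mul]
      refine Finset.sum_congr rfl fun i _ => ?_
      rw [mul_assoc, ← zpow_add₀ hϖ0, ← zpow_add₀ hϖ0]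
      simp only [normalizedMulMatrix, Matrix.of_apply, sub_eq_add_neg, add_assoc]
    _ = α * ϖ ^ (-r) := by
      rw [hexpand, mul_assoc, ← mul_assoc (ϖ ^ (j.val : ℤ)), ← zpow_add₀ hϖ0, add_neg_cancel,
        zpow_zero, one_mul]

theorem valuation_normalizedMulMatrix_le (hϖ : w ϖ = exp (-1))
    (hK : ∀ x : K, x ≠ 0 → ∃ a : ℤ, w (algebraMap K L x) = exp (n * a))
    (hb : ∀ i, b i = ϖ ^ (i.val : ℤ)) (i j : ZMod n) :
    w (normalizedMulMatrix b ϖ r α i j) ≤ w (α * ϖ ^ (-r)) := by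
  rw [← sum_normalizedMulMatrix (uniformizer_ne_zero hϖ) hb j]
  exact valuation_le_valuation_sum_mul_zpow hϖ hK _ (e := fun i => (i.val : ℤ) - j.val - r)
    (fun i k hik => by simpa using hik) i

theorem valuation_normalizedMulMatrix_ne_one (hϖ : w ϖ = exp (-1))
    (hK : ∀ x : K, x ≠ 0 → ∃ a : ℤ, w (algebraMap K L x) = exp (n * a)) {i j : ZMod n}
    (hij : i - j ≠ r) : w (normalizedMulMatrix b ϖ r α i j) ≠ 1 := fun h1 => by
  have hzero := intCast_eq_zero_of_valuation_mul_zpow_eq_one hϖ hK h1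
  exact hij (by simpa [sub_eq_zero] using hzero)

theorem coeff_charpoly_normalizedMulMatrix [FiniteDimensional K L] (hϖ0 : ϖ ≠ 0) {h : ℕ}
    (hh : h ≤ n) :
    (normalizedMulMatrix b ϖ r α).charpoly.coeff (n - h) =
      (ϖ ^ (-r)) ^ h * algebraMap K L ((LinearMap.mulLeft K α).charpoly.coeff (n - h)) := by
  let A := (LinearMap.toMatrix b b (LinearMap.mulLeft K α)).map (algebraMap K L)
  have hconj : normalizedMulMatrix b ϖ r α = ϖ ^ (-r) •
      Matrix.of fun i j => ϖ ^ (i.val : ℤ) * A i j * (ϖ ^ (j.val : ℤ))⁻¹ := by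
    ext i j
    simp only [normalizedMulMatrix, A, Matrix.of_apply, Matrix.smul_apply, Matrix.map_apply,
      smul_eq_mul, zpow_sub₀ hϖ0, zpow_neg]
    ring
  have hsmul := coeff_charpoly_smul (ϖ ^ (-r))
    (Matrix.of fun i j => ϖ ^ (i.val : ℤ) * A i j * (ϖ ^ (j.val : ℤ))⁻¹)
    (hh.trans_eq (ZMod.card n).symm)
  rw [charpoly_diagonal_conj (fun i => zpow_ne_zero _ hϖ0), ← hconj, ZMod.card,
    Matrix.charpoly_map, coeff_map, LinearMap.charpoly_toMatrix] at hsmul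
  exact hsmul

end NormalizedMulMatrix

theorem exists_residue_coeff_charpoly_mulLeft [FiniteDimensional K L] (hϖ : w ϖ = exp (-1))
    (hK : ∀ x : K, x ≠ 0 → ∃ a : ℤ, w (algebraMap K L x) = exp (n * a))
    (hrank : Module.finrank K L = n) {r : ℤ} {α : L} {c : w.valuationSubring}
    (hc : c = α * ϖ ^ (-r)) {u t h : ℕ} (hh : h ≤ n) (hu : addOrderOf (r : ZMod n) * u = n)
    (ht : addOrderOf (r : ZMod n) * t = h) :
    ∃ z : w.valuationSubring,
      z = (ϖ ^ (-r)) ^ h * algebraMap K L ((LinearMap.mulLeft K α).charpoly.coeff (n - h)) ∧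
      IsLocalRing.residue _ z = IsLocalRing.residue _ (c ^ h * ((-1) ^ t * (u.choose t : ℕ))) := by
  have : NeZero n := ⟨hrank ▸ Module.finrank_pos.ne'⟩
  obtain ⟨b, hb⟩ := exists_basis_pow_uniformizer hϖ hK hrank
  have hle (i j : ZMod n) : w (normalizedMulMatrix b ϖ r α i j) ≤ 1 :=
    (valuation_normalizedMulMatrix_le hϖ hK hb i j).trans (hc ▸ c.2)
  obtain ⟨B, hBmap, hBres⟩ := exists_map_residue_eq_smul_circulant hle
    (fun i j hij => (hle i j).lt_of_ne (valuation_normalizedMulMatrix_ne_one hϖ hK hij))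
    (fun j => (sum_normalizedMulMatrix (uniformizer_ne_zero hϖ) hb j).trans hc.symm)
  refine ⟨B.charpoly.coeff (n - h), ?_, ?_⟩
  · rw [← coeff_charpoly_normalizedMulMatrix (b := b) (uniformizer_ne_zero hϖ) hh, ← hBmap,
      Matrix.charpoly_map, coeff_map, ValuationSubring.subtype_apply]
  · have hcard := ZMod.card n
    have hsmul := coeff_charpoly_smul (IsLocalRing.residue _ c)
      (Matrix.circulant (Pi.single (r : ZMod n) 1)) (hh.trans_eq hcard.symm)
    have hcirc := coeff_charpoly_circulant_single (R := IsLocalRing.ResidueField w.valuationSubring)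
      (hu.trans hcard.symm) ht (hh.trans_eq hcard.symm)
    rw [hcard] at hsmul hcirc
    rw [← coeff_map, ← Matrix.charpoly_map, hBres, hsmul, hcirc]
    simp

end TotallyRamified

section Ecoef

variable {K L : Type} [Field K] [Field L] [Algebra K L] [FiniteDimensional K L] {n : ℕ}
  {w : Valuation L ℤᵐ⁰} {ϖ : L}

theorem valuation_algebraMap_Ecoef (h : ℕ) (α : L) :
    w (algebraMap K L (Ecoef K L h α)) =
      w (algebraMap K L ((LinearMap.mulLeft K α).charpoly.coeff (Module.finrank K L - h))) := by
  simp [Ecoef]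

theorem valuation_Ecoef_le_and_lt_iff (hϖ : w ϖ = exp (-1))
    (hK : ∀ x : K, x ≠ 0 → ∃ a : ℤ, w (algebraMap K L x) = exp (n * a))
    (hrank : Module.finrank K L = n) {r : ℤ} {α : L} (hα : w α ≤ exp (-r)) {u t h : ℕ}
    (hh : h ≤ n) (hu : addOrderOf (r : ZMod n) * u = n) (ht : addOrderOf (r : ZMod n) * t = h) :
    w (algebraMap K L (Ecoef K L h α)) ≤ exp (-(h * r)) ∧
      (w (algebraMap K L (Ecoef K L h α)) < exp (-(h * r)) ↔
        w (α ^ h * (u.choose t : L)) < exp (-(h * r))) := by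
  have hpow : (ϖ ^ (-r)) ^ h = ϖ ^ (-(h * r)) := by
    rw [← zpow_natCast, ← zpow_mul, neg_mul, mul_comm r]
  let c : w.valuationSubring := ⟨α * ϖ ^ (-r), (valuation_mul_zpow_neg_le_one_iff hϖ α r).2 hα⟩
  obtain ⟨z, hz, hres⟩ := exists_residue_coeff_charpoly_mulLeft (c := c) hϖ hK hrank rfl hh hu ht
  have hwz : w z = w (algebraMap K L (Ecoef K L h α) * ϖ ^ (-(h * r))) := by
    rw [hz, map_mul, map_mul, valuation_algebraMap_Ecoef, hrank, hpow, mul_comm]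
  have hwc : w (c ^ h * ((-1) ^ t * (u.choose t : ℕ)) : w.valuationSubring) =
      w (α ^ h * (u.choose t : L) * ϖ ^ (-(h * r))) := by
    rw [← hpow, mul_right_comm, ← mul_pow]
    simp [c]
  rw [← valuation_mul_zpow_neg_le_one_iff hϖ, ← valuation_mul_zpow_neg_lt_one_iff hϖ,
    ← valuation_mul_zpow_neg_lt_one_iff hϖ, ← hwz, ← hwc,
    ← residue_eq_zero_iff_valuation_lt_one, ← residue_eq_zero_iff_valuation_lt_one, hres]
  exact ⟨z.2, Iff.rfl⟩

theorem valuation_Ecoef_lt_of_dvd {p : ℕ} (hp : p.Prime) (hpw : w (p : L) < 1)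
    (hϖ : w ϖ = exp (-1)) (hK : ∀ x : K, x ≠ 0 → ∃ a : ℤ, w (algebraMap K L x) = exp (n * a))
    (hrank : Module.finrank K L = n) {r : ℤ} {α : L} (hα : w α ≤ exp (-r)) {u t h : ℕ}
    (hh : h ≤ n) (hu : addOrderOf (r : ZMod n) * u = n) (ht : addOrderOf (r : ZMod n) * t = h)
    (hdvd : p ∣ u.choose t) : w (algebraMap K L (Ecoef K L h α)) < exp (-(h * r)) := by
  refine (valuation_Ecoef_le_and_lt_iff hϖ hK hrank hα hh hu ht).2.2 ?_
  have hpow : w (α ^ h) ≤ exp (-(h * r)) := by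
    rw [map_pow, ← mul_neg, ← nsmul_eq_mul, exp_nsmul]
    exact pow_le_pow_left₀ zero_le hα h
  rw [map_mul]
  exact (mul_le_mul_left hpow _).trans_lt <|
    mul_lt_of_lt_one_right exp_pos ((valuation_natCast_lt_one_iff hp hpw _).2 hdvd)

theorem valuation_Ecoef_zpow_uniformizer {p : ℕ} (hp : p.Prime) (hpw : w (p : L) < 1)
    (hϖ : w ϖ = exp (-1)) (hK : ∀ x : K, x ≠ 0 → ∃ a : ℤ, w (algebraMap K L x) = exp (n * a))
    (hrank : Module.finrank K L = n) {r : ℤ} {u t h : ℕ} (hh : h ≤ n)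
    (hu : addOrderOf (r : ZMod n) * u = n) (ht : addOrderOf (r : ZMod n) * t = h)
    (hdvd : ¬ p ∣ u.choose t) :
    w (algebraMap K L (Ecoef K L h (ϖ ^ r))) = exp (-(h * r)) := by
  obtain ⟨hle, hlt⟩ := valuation_Ecoef_le_and_lt_iff hϖ hK hrank
    (valuation_zpow_uniformizer hϖ r).le hh hu ht
  refine hle.eq_of_not_lt fun hlt' => hdvd ?_
  have hpow : (ϖ ^ r) ^ h = ϖ ^ (h * r) := by rw [← zpow_natCast, ← zpow_mul, mul_comm]
  have hchoose := hlt.1 hlt'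
  rw [hpow, map_mul, valuation_zpow_uniformizer hϖ, mul_lt_iff_lt_one_right exp_pos] at hchoose
  exact (valuation_natCast_lt_one_iff hp hpw _).1 hchoose

end Ecoef

theorem stmt16_general
    (p : ℕ) (hp : p.Prime)
    (K L : Type) [Field K] [Field L] [Algebra K L] [FiniteDimensional K L]
    (n : ℕ) (hrank : Module.finrank K L = n)
    (vK : K → ℤ) (vL : L → ℤ)
    (hvLmul : ∀ x y : L, x ≠ 0 → y ≠ 0 → vL (x * y) = vL x + vL y)
    (hvLadd : ∀ x y : L, x ≠ 0 → y ≠ 0 → x + y ≠ 0 → min (vL x) (vL y) ≤ vL (x + y))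
    (hvLsurj : ∀ m : ℤ, ∃ x : L, x ≠ 0 ∧ vL x = m)
    (hext : ∀ x : K, x ≠ 0 → vL (algebraMap K L x) = (n : ℤ) * vK x)
    (hreschar : (p : K) = 0 ∨ 1 ≤ vK (p : K))
    (r : ℤ) (h : ℕ) (h2 : h ≤ n) (hdvd : (n : ℤ) ∣ (h : ℤ) * r) :
    (((∀ α : L, (α = 0 ∨ r ≤ vL α) →
          (Ecoef K L h α = 0 ∨ (h : ℤ) * r / (n : ℤ) ≤ vK (Ecoef K L h α))) ∧
        ∃ α : L, (α = 0 ∨ r ≤ vL α) ∧ Ecoef K L h α ≠ 0 ∧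
          vK (Ecoef K L h α) = (h : ℤ) * r / (n : ℤ)) ↔
      ¬ p ∣ Nat.choose (Int.gcd r (n : ℤ)) (Int.gcd (h : ℤ) ((h : ℤ) * r / (n : ℤ)))) ∧
    (Int.gcd r (n : ℤ) < Int.gcd (h : ℤ) ((h : ℤ) * r / (n : ℤ)) →
      ∀ α : L, (α = 0 ∨ r ≤ vL α) →
        (Ecoef K L h α = 0 ∨ (h : ℤ) * r / (n : ℤ) + 1 ≤ vK (Ecoef K L h α))) := by
  have hn : 0 < n := hrank ▸ Module.finrank_pos
  obtain ⟨w, hw⟩ := exists_valuation_eq_exp_neg hvLmul hvLadd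
  obtain ⟨ϖ, hϖ0, hϖv⟩ := hvLsurj 1
  have hϖ : w ϖ = exp (-1) := by rw [hw ϖ hϖ0, hϖv]
  have hwK (x : K) (hx : x ≠ 0) : w.comap (algebraMap K L) x = exp (-(n * vK x)) := by
    rw [Valuation.comap_apply, hw _ ((_root_.map_ne_zero _).2 hx), hext x hx]
  have hK (x : K) (hx : x ≠ 0) : ∃ a : ℤ, w (algebraMap K L x) = exp (n * a) :=
    ⟨-vK x, by rw [mul_neg]; exact hwK x hx⟩
  have hn' : (0 : ℤ) < n := by exact_mod_cast hn
  have hpw : w (p : L) < 1 := by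
    simpa using (valuation_lt_exp_neg_mul_iff hn' hwK (p : K) 0).2 (by simpa using hreschar)
  have hα (α : L) : α = 0 ∨ r ≤ vL α ↔ w α ≤ exp (-r) := by
    simpa using (valuation_le_exp_neg_mul_iff one_pos (by simpa using hw) α r).symm
  have hu := addOrderOf_intCast_mul_gcd hn.ne' r
  have ht := addOrderOf_intCast_mul_gcd_ediv hn.ne' hdvd
  simp only [hα, ← valuation_lt_exp_neg_mul_iff hn' hwK]
  simp only [← valuation_le_exp_neg_mul_iff hn' hwK, ← valuation_eq_exp_neg_mul_iff hn'.ne' hwK,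
    Valuation.comap_apply, Int.mul_ediv_cancel' hdvd]
  refine ⟨⟨?_, fun hC => ⟨fun α hα => ?_, ϖ ^ r, ?_, ?_⟩⟩, fun huv α hα => ?_⟩
  · rintro ⟨-, α, hα, heq⟩ hC
    exact (valuation_Ecoef_lt_of_dvd hp hpw hϖ hK hrank hα h2 hu ht hC).ne heq
  · exact (valuation_Ecoef_le_and_lt_iff hϖ hK hrank hα h2 hu ht).1
  · exact (valuation_zpow_uniformizer hϖ r).le
  · exact valuation_Ecoef_zpow_uniformizer hp hpw hϖ hK hrank h2 hu ht hC
  · refine valuation_Ecoef_lt_of_dvd hp hpw hϖ hK hrank hα h2 hu ht ?_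
    rw [Nat.choose_eq_zero_of_lt huv]
    exact dvd_zero p

theorem stmt16
    (p : ℕ) (hp : p.Prime)
    (K L : Type) [Field K] [Field L] [Algebra K L] [FiniteDimensional K L]
    [Algebra.IsSeparable K L]
    (n : ℕ) (hn : 0 < n) (hrank : Module.finrank K L = n)
    (vK : K → ℤ) (vL : L → ℤ)
    (hvKmul : ∀ x y : K, x ≠ 0 → y ≠ 0 → vK (x * y) = vK x + vK y)
    (hvKadd : ∀ x y : K, x ≠ 0 → y ≠ 0 → x + y ≠ 0 → min (vK x) (vK y) ≤ vK (x + y))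
    (hvKsurj : ∀ m : ℤ, ∃ x : K, x ≠ 0 ∧ vK x = m)
    (hvLmul : ∀ x y : L, x ≠ 0 → y ≠ 0 → vL (x * y) = vL x + vL y)
    (hvLadd : ∀ x y : L, x ≠ 0 → y ≠ 0 → x + y ≠ 0 → min (vL x) (vL y) ≤ vL (x + y))
    (hvLsurj : ∀ m : ℤ, ∃ x : L, x ≠ 0 ∧ vL x = m)
    (hext : ∀ x : K, x ≠ 0 → vL (algebraMap K L x) = (n : ℤ) * vK x)
    (hcomplete : ∀ s : ℕ → K,
      (∀ m : ℤ, ∃ N : ℕ, ∀ i, N ≤ i → ∀ j, N ≤ j → s i - s j = 0 ∨ m ≤ vK (s i - s j)) →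
      ∃ x : K, ∀ m : ℤ, ∃ N : ℕ, ∀ i, N ≤ i → s i - x = 0 ∨ m ≤ vK (s i - x))
    (hreschar : (p : K) = 0 ∨ 1 ≤ vK (p : K))
    (hresperf : ∀ x : K, (x = 0 ∨ 0 ≤ vK x) →
      ∃ y : K, (y = 0 ∨ 0 ≤ vK y) ∧ (x - y ^ p = 0 ∨ 1 ≤ vK (x - y ^ p)))
    (hpn : ¬ p ∣ n)
    (r : ℤ) (h : ℕ) (h1 : 1 ≤ h) (h2 : h ≤ n) (hdvd : (n : ℤ) ∣ (h : ℤ) * r) :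
    -- with `s = hr/n`, `u = gcd(r,n)`, `v = gcd(h,s)`:
    -- `g_h(r) = s` iff `p ∤ C(u,v)`, and if `u < v` then `g_h(r) > s`
    (((∀ α : L, (α = 0 ∨ r ≤ vL α) →
          (Ecoef K L h α = 0 ∨ (h : ℤ) * r / (n : ℤ) ≤ vK (Ecoef K L h α))) ∧
        ∃ α : L, (α = 0 ∨ r ≤ vL α) ∧ Ecoef K L h α ≠ 0 ∧
          vK (Ecoef K L h α) = (h : ℤ) * r / (n : ℤ)) ↔
      ¬ p ∣ Nat.choose (Int.gcd r (n : ℤ)) (Int.gcd (h : ℤ) ((h : ℤ) * r / (n : ℤ)))) ∧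
    (Int.gcd r (n : ℤ) < Int.gcd (h : ℤ) ((h : ℤ) * r / (n : ℤ)) →
      ∀ α : L, (α = 0 ∨ r ≤ vL α) →
        (Ecoef K L h α = 0 ∨ (h : ℤ) * r / (n : ℤ) + 1 ≤ vK (Ecoef K L h α))) := by
  exact stmt16_general p hp K L n hrank vK vL hvLmul hvLadd hvLsurj hext hreschar r h h2 hdvd
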